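/- Let λ > 0, 0 < a ≤ 1/2, ε > 0, and let δ₃ > 0. Define φ₂(w − w', θ − θ') = Γ(1/2)^{−1} ∫_0^∞ t^{−1/2} e^{−λt} (4πt)^{−1/2} e^{−(w−w')²/(4t)} k_a(t, θ − θ') dt, where k_a(t, φ) = (1/2π) Σ_{n∈ℤ} e^{−(n² − 2an²/√(n²+ε)) t} e^{inφ}. Then there exist constants C > 0 and δ₄ > 0 such that: (i) |φ₂| ≤ (1/2π) ((w−w')² + (θ−θ')²)^{−1/2} + C |w−w'|^{−δ₃} whenever 0 < |w−w'| ≤ 1 and |θ−θ'| ≤ π; (ii) |φ₂| ≤ C e^{−δ₄|w−w'|} whenever |w−w'| ≥ 1 and |θ−θ'| ≤ π. -/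

import Mathlib

/-!
The heat kernel `k_a` is compared with the free one, `k_0`. The eigenvalues
`E_n = n² - 2an²/√(n²+ε)` satisfy `c n² ≤ E_n` and `0 ≤ n² - E_n ≤ |n|` with
`c = 1 - 1/√(1+ε) > 0`, so `|e^{-E_n t} - e^{-n² t}| ≤ t|n|e^{-c n² t}`, and the sum of the right
side over `n ∈ ℤ` is bounded uniformly in `t` by a telescoping argument. Poisson summation turns
`k_0` into a sum of Gaussians on the line, of which only the central one is unbounded as `t → 0`.
Since `k_a(t, ·)` is bounded for `t ≥ 1`, this gives (`heatKernelTa_le`)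
`|k_a(t, φ)| ≤ (4πt)^{-1/2} e^{-φ²/(4t)} + C` for all `t > 0` and `|φ| ≤ π`.

Both estimates follow by inserting this pointwise bound under the subordination integral. The
Gaussian term integrates exactly to `(1/2π)(w²+φ²)^{-1/2}` once `e^{-λt}` is dropped; the constant
term is controlled by `e^{-x} ≤ K x^{-δ/2}` with `x = w²/(4t)`, which makes the integral a Gamma
integral times `|w|^{-δ}`. For `|w| ≥ 1`, the inequality
`λt + w²/(4t) ≥ (√λ/2)|w| + λt/2 + 1/(8t)` extracts the exponential decay and leaves an integral
independent of `w`.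
-/

open MeasureTheory Real

/-- The heat kernel of the operator `T_a = -Σ_n (n² - 2an²/√(n²+ε)) P_n` on
`L²(𝕊¹)`: `k_a(t, φ) = (1/2π) Σ_{n∈ℤ} e^{-(n² - 2an²/√(n²+ε)) t} e^{inφ}`. -/
noncomputable def heatKernelTa (a ε t φ : ℝ) : ℂ :=
  (1 / (2 * (π : ℂ))) * ∑' n : ℤ,
    Complex.exp (-((((n : ℝ) ^ 2 - 2 * a * (n : ℝ) ^ 2 / Real.sqrt ((n : ℝ) ^ 2 + ε)) * t : ℝ) : ℂ)) *
      Complex.exp (Complex.I * (n : ℂ) * (φ : ℂ))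

/-- The integral kernel `φ₂` of `(-∂_w² - T_a + λ)^{-1/2}` on the cylinder
`ℝ × 𝕊¹`, evaluated at the difference `(w - w', θ - θ')`, obtained by the
subordination formula from the heat kernel of `∂_w² + T_a` (a product of the
one-dimensional Gaussian heat kernel and `k_a`). -/
noncomputable def phiTwo (a ε lam w φ : ℝ) : ℂ :=
  (1 / (Real.Gamma (1 / 2) : ℂ)) *
    ∫ t in Set.Ioi (0 : ℝ),
      ((t ^ (-(1 : ℝ) / 2) * Real.exp (-lam * t) *
          (4 * π * t) ^ (-(1 : ℝ) / 2) * Real.exp (-w ^ 2 / (4 * t)) : ℝ) : ℂ) *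
        heatKernelTa a ε t φ

/-! ### Eigenvalues of `T_a` -/

/-- The eigenvalue `n² - 2an²/√(n²+ε)` of `-T_a` on `e^{inθ}`. -/
noncomputable def eigTa (a ε : ℝ) (n : ℤ) : ℝ :=
  (n : ℝ) ^ 2 - 2 * a * (n : ℝ) ^ 2 / Real.sqrt ((n : ℝ) ^ 2 + ε)

/-- The constant `1 - 1/√(1+ε)` with `eigTa a ε n ≥ coerc ε * n²`. -/
noncomputable def coerc (ε : ℝ) : ℝ := 1 - 1 / Real.sqrt (1 + ε)

lemma coerc_pos {ε : ℝ} (hε : 0 < ε) : 0 < coerc ε := by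
  have h : 1 < Real.sqrt (1 + ε) := by
    rw [Real.lt_sqrt (by norm_num)]; linarith
  have := (div_lt_one (by linarith)).2 h
  unfold coerc; linarith

lemma coerc_mul_sq_le_eigTa {a ε : ℝ} (ha0 : 0 < a) (ha1 : a ≤ 1 / 2) (hε : 0 < ε) (n : ℤ) :
    coerc ε * (n : ℝ) ^ 2 ≤ eigTa a ε n := by
  unfold coerc eigTa
  rcases eq_or_ne n 0 with rfl | hn
  · simp
  have h1 : (1 : ℝ) ≤ (n : ℝ) ^ 2 := by
    have : (1 : ℤ) ≤ n ^ 2 := by have := sq_pos_of_ne_zero hn; omega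
    exact_mod_cast this
  have h2 : Real.sqrt (1 + ε) ≤ Real.sqrt ((n : ℝ) ^ 2 + ε) :=
    Real.sqrt_le_sqrt (by linarith)
  have h3 : 0 < Real.sqrt (1 + ε) := Real.sqrt_pos.2 (by linarith)
  have h4 : 2 * a / Real.sqrt ((n : ℝ) ^ 2 + ε) ≤ 1 / Real.sqrt (1 + ε) :=
    div_le_div₀ zero_le_one (by linarith) h3 h2
  have h5 : 2 * a * (n : ℝ) ^ 2 / Real.sqrt ((n : ℝ) ^ 2 + ε)
      = 2 * a / Real.sqrt ((n : ℝ) ^ 2 + ε) * (n : ℝ) ^ 2 := by ring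
  rw [h5]
  nlinarith

lemma eigTa_le_sq {a ε : ℝ} (ha0 : 0 < a) (n : ℤ) : eigTa a ε n ≤ (n : ℝ) ^ 2 := by
  unfold eigTa
  have : 0 ≤ 2 * a * (n : ℝ) ^ 2 / Real.sqrt ((n : ℝ) ^ 2 + ε) := by positivity
  linarith

lemma sq_sub_eigTa_le {a ε : ℝ} (ha1 : a ≤ 1 / 2) (hε : 0 < ε) (n : ℤ) :
    (n : ℝ) ^ 2 - eigTa a ε n ≤ |(n : ℝ)| := by
  unfold eigTa
  have h0 : 0 < Real.sqrt ((n : ℝ) ^ 2 + ε) := Real.sqrt_pos.2 (by positivity)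
  have h1 : |(n : ℝ)| ≤ Real.sqrt ((n : ℝ) ^ 2 + ε) := Real.abs_le_sqrt (by linarith)
  rw [sub_sub_cancel, div_le_iff₀ h0]
  have h2 : |(n : ℝ)| * |(n : ℝ)| = (n : ℝ) ^ 2 := by rw [← sq, sq_abs]
  nlinarith [abs_nonneg (n : ℝ), sq_nonneg (n : ℝ)]

/-! ### Uniform summation of Gaussians -/

/-- `∑ s n e^{-sn²}` is dominated by the telescoping sum of `e^{-s(n-1)²} - e^{-sn²}`. -/
lemma sum_range_gauss_le {s : ℝ} (hs : 0 < s) (N : ℕ) :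
    ∑ n ∈ Finset.range N, s * (n + 1 : ℝ) * Real.exp (-s * (n + 1 : ℝ) ^ 2) ≤ 1 := by
  have key : ∀ n : ℕ, s * (n + 1 : ℝ) * Real.exp (-s * (n + 1 : ℝ) ^ 2) ≤
      Real.exp (-s * (n : ℝ) ^ 2) - Real.exp (-s * ((n + 1 : ℕ) : ℝ) ^ 2) := by
    intro n
    have h1 : Real.exp (-s * (n : ℝ) ^ 2)
        = Real.exp (s * (2 * n + 1)) * Real.exp (-s * (n + 1 : ℝ) ^ 2) := by
      rw [← Real.exp_add]; congr 1; ring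
    have h2 := Real.add_one_le_exp (s * (2 * n + 1))
    have h3 : 0 ≤ s * (n : ℝ) := by positivity
    have h4 : s * (n + 1 : ℝ) ≤ Real.exp (s * (2 * n + 1)) - 1 := by nlinarith
    rw [h1]; push_cast
    have := mul_le_mul_of_nonneg_right h4 (Real.exp_nonneg (-s * (n + 1 : ℝ) ^ 2))
    linarith
  refine (Finset.sum_le_sum fun n _ => key n).trans ?_
  rw [Finset.sum_range_sub' (fun n : ℕ => Real.exp (-s * (n : ℝ) ^ 2)) N]
  have := Real.exp_nonneg (-s * (N : ℝ) ^ 2)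
  simp only [Nat.cast_zero]
  norm_num
  simpa using this

/-- The sum `∑_{n ∈ ℤ} s|n|e^{-sn²}` is bounded by `2`, uniformly in `s > 0`. -/
lemma exists_hasSum_gauss {s : ℝ} (hs : 0 < s) :
    ∃ S ≤ 2, HasSum (fun n : ℤ => s * |(n : ℝ)| * Real.exp (-s * (n : ℝ) ^ 2)) S := by
  have hnn : ∀ n : ℕ, 0 ≤ s * (n + 1 : ℝ) * Real.exp (-s * (n + 1 : ℝ) ^ 2) :=
    fun n => by positivity
  have hsum := summable_of_sum_range_le hnn (sum_range_gauss_le hs)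
  have hle := Real.tsum_le_of_sum_range_le hnn (sum_range_gauss_le hs)
  obtain ⟨T, hT⟩ := hsum
  rw [hT.tsum_eq] at hle
  have h1 : HasSum (fun n : ℕ => s * |((n : ℤ) : ℝ)| * Real.exp (-s * ((n : ℤ) : ℝ) ^ 2)) T := by
    rw [← hasSum_nat_add_iff' 1]
    have habs : ∀ n : ℕ, |(n : ℝ) + 1| = n + 1 := fun n => abs_of_nonneg (by positivity)
    simpa [habs] using hT
  have h2 : HasSum (fun n : ℕ => s * |((-((n : ℤ) + 1) : ℤ) : ℝ)| *
      Real.exp (-s * ((-((n : ℤ) + 1) : ℤ) : ℝ) ^ 2)) T := by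
    convert hT using 2 with n
    have : ((-((n : ℤ) + 1) : ℤ) : ℝ) = -((n : ℝ) + 1) := by push_cast; ring
    rw [this, abs_neg, neg_sq, abs_of_nonneg (by positivity)]
  exact ⟨T + T, by linarith, HasSum.of_nat_of_neg_add_one
    (f := fun n : ℤ => s * |(n : ℝ)| * Real.exp (-s * (n : ℝ) ^ 2)) h1 h2⟩

lemma summable_exp_neg_mul_int_sq {s : ℝ} (hs : 0 < s) :
    Summable (fun n : ℤ => Real.exp (-s * (n : ℝ) ^ 2)) := by
  obtain ⟨S, -, hS⟩ := exists_hasSum_gauss hs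
  refine Summable.of_nonneg_of_le (fun n => Real.exp_nonneg _) ?_
    ((hS.summable.mul_left s⁻¹).add (hasSum_ite_eq (0 : ℤ) (1 : ℝ)).summable)
  intro n
  rcases eq_or_ne n 0 with rfl | hn
  · simp
  have h1 : (1 : ℝ) ≤ |(n : ℝ)| := by exact_mod_cast Int.one_le_abs hn
  have h2 : s⁻¹ * (s * |(n : ℝ)| * Real.exp (-s * (n : ℝ) ^ 2))
      = |(n : ℝ)| * Real.exp (-s * (n : ℝ) ^ 2) := by field_simp
  rw [if_neg hn, add_zero, h2]
  exact le_mul_of_one_le_left (Real.exp_nonneg _) h1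

lemma summable_exp_eigTa {a ε t : ℝ} (ha0 : 0 < a) (ha1 : a ≤ 1 / 2) (hε : 0 < ε) (ht : 0 < t) :
    Summable (fun n : ℤ => Real.exp (-(eigTa a ε n * t))) := by
  refine Summable.of_nonneg_of_le (fun n => Real.exp_nonneg _) (fun n => ?_)
    (summable_exp_neg_mul_int_sq (mul_pos (coerc_pos hε) ht))
  refine Real.exp_le_exp.2 ?_
  nlinarith [coerc_mul_sq_le_eigTa ha0 ha1 hε n]

/-! ### The heat kernel of `T_a` -/

lemma norm_heat_term (E φ : ℝ) (n : ℤ) :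
    ‖Complex.exp (-((E : ℝ) : ℂ)) * Complex.exp (Complex.I * (n : ℂ) * (φ : ℂ))‖ =
      Real.exp (-E) := by
  have : Complex.I * (n : ℂ) * (φ : ℂ) = (((n : ℝ) * φ : ℝ) : ℂ) * Complex.I := by
    push_cast; ring
  rw [norm_mul, this, Complex.norm_exp_ofReal_mul_I, mul_one, ← Complex.ofReal_neg,
    Complex.norm_exp_ofReal]

/-- Poisson summation for the heat kernel of the circle. -/
lemma poisson_heat {t : ℝ} (ht : 0 < t) (φ : ℝ) :
    (1 / (2 * (π : ℂ))) * ∑' n : ℤ, Complex.exp (-(((n : ℝ) ^ 2 * t : ℝ) : ℂ)) *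
      Complex.exp (Complex.I * (n : ℂ) * (φ : ℂ)) =
    (((4 * π * t) ^ (-(1 : ℝ) / 2) : ℝ) : ℂ) *
      ∑' n : ℤ, ((Real.exp (-(2 * π * n - φ) ^ 2 / (4 * t)) : ℝ) : ℂ) := by
  have hπ : (π : ℂ) ≠ 0 := by exact_mod_cast Real.pi_ne_zero
  have htc : (t : ℂ) ≠ 0 := by exact_mod_cast ht.ne'
  have hre : 0 < (((t / π : ℝ) : ℂ)).re := by
    rw [Complex.ofReal_re]; positivity
  have h := Complex.tsum_exp_neg_quadratic hre (Complex.I * φ / (2 * π))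
  have hL : ∀ n : ℤ, Complex.exp (-(((n : ℝ) ^ 2 * t : ℝ) : ℂ)) *
      Complex.exp (Complex.I * (n : ℂ) * (φ : ℂ)) =
      Complex.exp (-π * ((t / π : ℝ) : ℂ) * n ^ 2 + 2 * π * (Complex.I * φ / (2 * π)) * n) := by
    intro n
    rw [← Complex.exp_add]; congr 1; push_cast; field_simp
  have hR : ∀ n : ℤ, ((Real.exp (-(2 * π * n - φ) ^ 2 / (4 * t)) : ℝ) : ℂ) =
      Complex.exp (-π / ((t / π : ℝ) : ℂ) * (n + Complex.I * (Complex.I * φ / (2 * π))) ^ 2) := by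
    intro n
    rw [Complex.ofReal_exp]; congr 1; push_cast
    have : Complex.I * (Complex.I * φ / (2 * π)) = -(φ / (2 * π) : ℂ) := by
      rw [← mul_div_assoc, ← mul_assoc, Complex.I_mul_I]; ring
    rw [this]; field_simp; ring
  rw [tsum_congr hL, tsum_congr hR, h, ← mul_assoc]
  congr 1
  have hc : (((t / π : ℝ) : ℂ)) ^ (1 / 2 : ℂ) = ((Real.sqrt (t / π) : ℝ) : ℂ) := by
    rw [Real.sqrt_eq_rpow, Complex.ofReal_cpow (by positivity)]; norm_num
  have hr : (4 * π * t) ^ (-(1 : ℝ) / 2) = (1 / (2 * π)) * (1 / Real.sqrt (t / π)) := by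
    rw [show -(1 : ℝ) / 2 = -(1 / 2) by ring, Real.rpow_neg (by positivity), ← Real.sqrt_eq_rpow,
      show 4 * π * t = (2 * π) ^ 2 * (t / π) by field_simp; ring, Real.sqrt_mul (by positivity),
      Real.sqrt_sq (by positivity)]
    field_simp
  rw [hc, hr]; push_cast; ring

/-- For `|φ| ≤ π` each Gaussian centred at `2πn ≠ 0` is at most `t/n²`. -/
lemma exp_image_le {t φ : ℝ} (ht : 0 < t) (hφ : |φ| ≤ π) (n : ℤ) :
    Real.exp (-(2 * π * n - φ) ^ 2 / (4 * t)) ≤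
      (if n = 0 then Real.exp (-φ ^ 2 / (4 * t)) else 0) + t * (1 / (n : ℝ) ^ 2) := by
  rcases eq_or_ne n 0 with rfl | hn
  · simp
  have h1 : (1 : ℝ) ≤ |(n : ℝ)| := by exact_mod_cast Int.one_le_abs hn
  have hπ := Real.pi_gt_three
  have h2 : 3 * |(n : ℝ)| ≤ |2 * π * n - φ| := by
    have := abs_sub_abs_le_abs_sub (2 * π * n) φ
    rw [abs_mul, abs_of_pos (by positivity : (0 : ℝ) < 2 * π)] at this
    nlinarith
  have h3 : 4 * (n : ℝ) ^ 2 ≤ (2 * π * n - φ) ^ 2 := by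
    rw [← sq_abs (2 * π * n - φ), ← sq_abs (n : ℝ)]
    nlinarith [abs_nonneg (n : ℝ)]
  have hn2 : 0 < (n : ℝ) ^ 2 := by positivity
  rw [if_neg hn, zero_add, neg_div, Real.exp_neg]
  have h4 : (n : ℝ) ^ 2 / t ≤ Real.exp ((2 * π * n - φ) ^ 2 / (4 * t)) := by
    have := Real.add_one_le_exp ((2 * π * n - φ) ^ 2 / (4 * t))
    have h5 : (n : ℝ) ^ 2 / t ≤ (2 * π * n - φ) ^ 2 / (4 * t) := by
      rw [div_le_div_iff₀ ht (by positivity)]; nlinarith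
    linarith
  calc _ ≤ ((n : ℝ) ^ 2 / t)⁻¹ := inv_anti₀ (by positivity) h4
    _ = _ := by field_simp

lemma free_heat_le {t φ : ℝ} (ht : 0 < t) (ht1 : t ≤ 1) (hφ : |φ| ≤ π) :
    ‖(1 / (2 * (π : ℂ))) * ∑' n : ℤ, Complex.exp (-(((n : ℝ) ^ 2 * t : ℝ) : ℂ)) *
      Complex.exp (Complex.I * (n : ℂ) * (φ : ℂ))‖ ≤
    (4 * π * t) ^ (-(1 : ℝ) / 2) * Real.exp (-φ ^ 2 / (4 * t)) + ∑' n : ℤ, 1 / (n : ℝ) ^ 2 := by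
  rw [poisson_heat ht, norm_mul, Complex.norm_real, Real.norm_of_nonneg (by positivity)]
  have hS : Summable (fun n : ℤ => 1 / (n : ℝ) ^ 2) := Real.summable_one_div_int_pow.2 one_lt_two
  have hS0 : 0 ≤ ∑' n : ℤ, 1 / (n : ℝ) ^ 2 := tsum_nonneg fun n => by positivity
  have hb := tsum_of_norm_bounded
    (f := fun n : ℤ => ((Real.exp (-(2 * π * n - φ) ^ 2 / (4 * t)) : ℝ) : ℂ))
    ((hasSum_ite_eq (0 : ℤ) (Real.exp (-φ ^ 2 / (4 * t)))).add (hS.hasSum.mul_left t))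
    (fun n => by
      rw [Complex.norm_real, Real.norm_of_nonneg (Real.exp_nonneg _)]
      exact exp_image_le ht hφ n)
  have hA : (4 * π * t) ^ (-(1 : ℝ) / 2) * t ≤ 1 := by
    have h1 : (4 * π * t) ^ (-(1 : ℝ) / 2) ≤ t ^ (-(1 : ℝ) / 2) :=
      Real.rpow_le_rpow_of_nonpos ht (by nlinarith [Real.pi_gt_three]) (by norm_num)
    have h2 : t ^ (-(1 : ℝ) / 2) ≤ t ^ (-1 : ℝ) :=
      Real.rpow_le_rpow_of_exponent_ge ht ht1 (by norm_num)
    have h3 : t ^ (-1 : ℝ) * t = 1 := by rw [Real.rpow_neg_one]; field_simp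
    nlinarith
  have hA0 : 0 ≤ (4 * π * t) ^ (-(1 : ℝ) / 2) := by positivity
  calc _ ≤ (4 * π * t) ^ (-(1 : ℝ) / 2) *
        (Real.exp (-φ ^ 2 / (4 * t)) + t * ∑' n : ℤ, 1 / (n : ℝ) ^ 2) :=
        mul_le_mul_of_nonneg_left hb hA0
    _ = (4 * π * t) ^ (-(1 : ℝ) / 2) * Real.exp (-φ ^ 2 / (4 * t)) +
        ((4 * π * t) ^ (-(1 : ℝ) / 2) * t) * ∑' n : ℤ, 1 / (n : ℝ) ^ 2 := by ring
    _ ≤ _ := by nlinarith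

/-- The perturbation `T_a - T_0`, being of order one, changes the `n`-th Fourier coefficient of the
heat kernel by at most `t|n|e^{-c n² t}`. -/
lemma norm_heat_sub_le {a ε t : ℝ} (ha0 : 0 < a) (ha1 : a ≤ 1 / 2) (hε : 0 < ε) (ht : 0 < t)
    (φ : ℝ) (n : ℤ) :
    ‖Complex.exp (-((eigTa a ε n * t : ℝ) : ℂ)) * Complex.exp (Complex.I * (n : ℂ) * (φ : ℂ)) -
      Complex.exp (-(((n : ℝ) ^ 2 * t : ℝ) : ℂ)) * Complex.exp (Complex.I * (n : ℂ) * (φ : ℂ))‖ ≤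
    (coerc ε)⁻¹ * (coerc ε * t * |(n : ℝ)| * Real.exp (-(coerc ε * t) * (n : ℝ) ^ 2)) := by
  have hc := coerc_pos hε
  have h1 : Complex.I * (n : ℂ) * (φ : ℂ) = (((n : ℝ) * φ : ℝ) : ℂ) * Complex.I := by
    push_cast; ring
  rw [← sub_mul, norm_mul, h1, Complex.norm_exp_ofReal_mul_I, mul_one, ← Complex.ofReal_neg,
    ← Complex.ofReal_neg, ← Complex.ofReal_exp, ← Complex.ofReal_exp, ← Complex.ofReal_sub,
    Complex.norm_real]
  have hle := eigTa_le_sq (ε := ε) ha0 n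
  rw [Real.norm_of_nonneg (sub_nonneg.2 (Real.exp_le_exp.2 (by nlinarith)))]
  have h2 : Real.exp (-((n : ℝ) ^ 2 * t)) = Real.exp (-(((n : ℝ) ^ 2 - eigTa a ε n) * t)) *
      Real.exp (-(eigTa a ε n * t)) := by
    rw [← Real.exp_add]; congr 1; ring
  have h3 := Real.add_one_le_exp (-(((n : ℝ) ^ 2 - eigTa a ε n) * t))
  have h4 : ((n : ℝ) ^ 2 - eigTa a ε n) * t ≤ |(n : ℝ)| * t :=
    mul_le_mul_of_nonneg_right (sq_sub_eigTa_le ha1 hε n) ht.le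
  have h5 : Real.exp (-(eigTa a ε n * t)) ≤ Real.exp (-(coerc ε * t) * (n : ℝ) ^ 2) :=
    Real.exp_le_exp.2 (by nlinarith [coerc_mul_sq_le_eigTa ha0 ha1 hε n])
  have h6 := Real.exp_nonneg (-(eigTa a ε n * t))
  have h7 : 0 ≤ |(n : ℝ)| * t := by positivity
  calc _ = (1 - Real.exp (-(((n : ℝ) ^ 2 - eigTa a ε n) * t))) *
        Real.exp (-(eigTa a ε n * t)) := by rw [h2]; ring
    _ ≤ (|(n : ℝ)| * t) * Real.exp (-(eigTa a ε n * t)) :=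
        mul_le_mul_of_nonneg_right (by linarith) h6
    _ ≤ (|(n : ℝ)| * t) * Real.exp (-(coerc ε * t) * (n : ℝ) ^ 2) :=
        mul_le_mul_of_nonneg_left h5 h7
    _ = _ := by field_simp

/-- The heat kernel `k_a` is the Gaussian on the line up to a bounded error. -/
lemma heatKernelTa_le {a ε : ℝ} (ha0 : 0 < a) (ha1 : a ≤ 1 / 2) (hε : 0 < ε) :
    ∃ C > 0, ∀ t φ : ℝ, 0 < t → |φ| ≤ π → ‖heatKernelTa a ε t φ‖ ≤
      (4 * π * t) ^ (-(1 : ℝ) / 2) * Real.exp (-φ ^ 2 / (4 * t)) + C := by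
  set S₁ := ∑' n : ℤ, 1 / (n : ℝ) ^ 2
  set S₂ := ∑' n : ℤ, Real.exp (-(eigTa a ε n * 1))
  have hS₁ : 0 ≤ S₁ := tsum_nonneg fun n => by positivity
  have hS₂ : 0 ≤ S₂ := tsum_nonneg fun n => Real.exp_nonneg _
  have hc := coerc_pos hε
  have hπ : ‖1 / (2 * (π : ℂ))‖ ≤ 1 := by
    rw [show 1 / (2 * (π : ℂ)) = ((1 / (2 * π) : ℝ) : ℂ) by push_cast; rfl, Complex.norm_real,
      Real.norm_of_nonneg (by positivity), div_le_one (by positivity)]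
    linarith [Real.pi_gt_three]
  refine ⟨S₁ + S₂ + (coerc ε)⁻¹ * 2, by positivity, fun t φ ht hφ => ?_⟩
  have hdef : heatKernelTa a ε t φ = (1 / (2 * (π : ℂ))) *
      ∑' n : ℤ, Complex.exp (-((eigTa a ε n * t : ℝ) : ℂ)) *
        Complex.exp (Complex.I * (n : ℂ) * (φ : ℂ)) := rfl
  rw [hdef]
  have hG : 0 ≤ (4 * π * t) ^ (-(1 : ℝ) / 2) * Real.exp (-φ ^ 2 / (4 * t)) := by positivity
  have hc2 : 0 ≤ (coerc ε)⁻¹ * 2 := by positivity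
  rcases le_total t 1 with ht1 | ht1
  · obtain ⟨S, hS2, hS⟩ := exists_hasSum_gauss (mul_pos hc ht)
    have hsa : Summable (fun n : ℤ => Complex.exp (-((eigTa a ε n * t : ℝ) : ℂ)) *
        Complex.exp (Complex.I * (n : ℂ) * (φ : ℂ))) :=
      Summable.of_norm (by
        simpa only [norm_heat_term] using summable_exp_eigTa ha0 ha1 hε ht)
    have hs0 : Summable (fun n : ℤ => Complex.exp (-(((n : ℝ) ^ 2 * t : ℝ) : ℂ)) *
        Complex.exp (Complex.I * (n : ℂ) * (φ : ℂ))) :=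
      Summable.of_norm (by
        simp only [norm_heat_term]
        refine (summable_exp_neg_mul_int_sq ht).congr fun n => ?_
        congr 1; ring)
    have hd := tsum_of_norm_bounded (hS.mul_left (coerc ε)⁻¹)
      (norm_heat_sub_le ha0 ha1 hε ht φ)
    rw [hsa.tsum_sub hs0] at hd
    have hf := free_heat_le ht ht1 hφ
    set A := ∑' n : ℤ, Complex.exp (-((eigTa a ε n * t : ℝ) : ℂ)) *
        Complex.exp (Complex.I * (n : ℂ) * (φ : ℂ))
    set B := ∑' n : ℤ, Complex.exp (-(((n : ℝ) ^ 2 * t : ℝ) : ℂ)) *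
        Complex.exp (Complex.I * (n : ℂ) * (φ : ℂ))
    have h1 : (1 / (2 * (π : ℂ))) * A = (1 / (2 * (π : ℂ))) * B + (1 / (2 * (π : ℂ))) * (A - B) := by
      ring
    have h2 : ‖(1 / (2 * (π : ℂ))) * (A - B)‖ ≤ (coerc ε)⁻¹ * 2 := by
      rw [norm_mul]
      calc _ ≤ 1 * ((coerc ε)⁻¹ * S) := mul_le_mul hπ hd (norm_nonneg _) zero_le_one
        _ ≤ _ := by rw [one_mul]; exact mul_le_mul_of_nonneg_left hS2 (by positivity)
    rw [h1]
    refine (norm_add_le _ _).trans ?_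
    linarith
  · have h1 : ‖∑' n : ℤ, Complex.exp (-((eigTa a ε n * t : ℝ) : ℂ)) *
        Complex.exp (Complex.I * (n : ℂ) * (φ : ℂ))‖ ≤ S₂ := by
      refine tsum_of_norm_bounded (summable_exp_eigTa ha0 ha1 hε one_pos).hasSum fun n => ?_
      rw [norm_heat_term]
      refine Real.exp_le_exp.2 (neg_le_neg ?_)
      have : 0 ≤ eigTa a ε n :=
        le_trans (by positivity) (coerc_mul_sq_le_eigTa ha0 ha1 hε n)
      exact mul_le_mul_of_nonneg_left ht1 this
    rw [norm_mul]
    have := mul_le_mul hπ h1 (norm_nonneg _) zero_le_one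
    linarith

/-! ### The subordination integral -/

lemma integrableOn_gamma {p r : ℝ} (hp : 0 < p) (hr : 0 < r) :
    IntegrableOn (fun t : ℝ => t ^ (p - 1) * Real.exp (-(r * t))) (Set.Ioi 0) := by
  have := integrableOn_rpow_mul_exp_neg_mul_rpow (s := p - 1) (p := 1) (b := r) (by linarith)
    one_pos hr
  simpa using this

/-- The subordination integral `∫ t^{-3/2} e^{-b/t} dt = √π / √b`, by the substitution `y = 1/t`. -/
lemma integral_subordination {b : ℝ} (hb : 0 < b) :
    IntegrableOn (fun t : ℝ => t ^ (-(3 : ℝ) / 2) * Real.exp (-(b / t))) (Set.Ioi 0) ∧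
    ∫ t in Set.Ioi (0 : ℝ), t ^ (-(3 : ℝ) / 2) * Real.exp (-(b / t)) = √π / √b := by
  have hp : (-1 : ℝ) ≠ 0 := by norm_num
  have heq : Set.EqOn (fun x : ℝ => (|(-1 : ℝ)| * x ^ ((-1 : ℝ) - 1)) •
      (fun y : ℝ => y ^ ((1 / 2 : ℝ) - 1) * Real.exp (-(b * y))) (x ^ (-1 : ℝ)))
      (fun t : ℝ => t ^ (-(3 : ℝ) / 2) * Real.exp (-(b / t))) (Set.Ioi 0) := by
    intro t ht
    have ht : 0 < t := ht
    simp only [smul_eq_mul, abs_neg, abs_one, one_mul]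
    rw [← Real.rpow_mul ht.le, ← mul_assoc, ← Real.rpow_add ht, Real.rpow_neg_one, ← div_eq_mul_inv]
    norm_num
  constructor
  · refine IntegrableOn.congr_fun ?_ heq measurableSet_Ioi
    exact (integrableOn_Ioi_comp_rpow_iff _ hp).2 (integrableOn_gamma (by norm_num) hb)
  · rw [← setIntegral_congr_fun measurableSet_Ioi heq, integral_comp_rpow_Ioi
        (fun y : ℝ => y ^ ((1 / 2 : ℝ) - 1) * Real.exp (-(b * y))) hp,
      Real.integral_rpow_mul_exp_neg_mul_Ioi (by norm_num) hb, Real.Gamma_one_half_eq,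
      ← Real.sqrt_eq_rpow, Real.sqrt_div zero_le_one, Real.sqrt_one]
    ring

lemma exp_neg_le_rpow {x p : ℝ} (hx : 0 < x) (hp : 0 < p) :
    Real.exp (-x) ≤ p ^ p * x ^ (-p) := by
  have h1 : x / p ≤ Real.exp (x / p) := by linarith [Real.add_one_le_exp (x / p)]
  have h2 : (x / p) ^ p ≤ Real.exp x := by
    calc _ ≤ (Real.exp (x / p)) ^ p := Real.rpow_le_rpow (by positivity) h1 hp.le
      _ = Real.exp x := by rw [← Real.exp_mul]; congr 1; field_simp
  rw [Real.exp_neg]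
  calc _ ≤ ((x / p) ^ p)⁻¹ := inv_anti₀ (by positivity) h2
    _ = _ := by
      rw [Real.div_rpow hx.le hp.le, inv_div, Real.rpow_neg hx.le]; rfl

/-- The weight in `t` against which the heat kernel is integrated in `phiTwo`. -/
noncomputable def subWeight (lam w t : ℝ) : ℝ :=
  t ^ (-(1 : ℝ) / 2) * Real.exp (-lam * t) * (4 * π * t) ^ (-(1 : ℝ) / 2) *
    Real.exp (-w ^ 2 / (4 * t))

/-- A majorant `g` of the subordination integrand bounds `phiTwo`; if the integrand failed to be
integrable the integral would be `0`, so its measurability is not needed. -/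
lemma phiTwo_le {a ε lam w φ C : ℝ} {g : ℝ → ℝ}
    (hk : ∀ t : ℝ, 0 < t → ‖heatKernelTa a ε t φ‖ ≤
      (4 * π * t) ^ (-(1 : ℝ) / 2) * Real.exp (-φ ^ 2 / (4 * t)) + C)
    (hg : IntegrableOn g (Set.Ioi 0))
    (hle : ∀ t : ℝ, 0 < t → subWeight lam w t *
      ((4 * π * t) ^ (-(1 : ℝ) / 2) * Real.exp (-φ ^ 2 / (4 * t)) + C) ≤ g t) :
    ‖phiTwo a ε lam w φ‖ ≤ (√π)⁻¹ * ∫ t in Set.Ioi (0 : ℝ), g t := by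
  have hdef : phiTwo a ε lam w φ = (1 / (Real.Gamma (1 / 2) : ℂ)) *
      ∫ t in Set.Ioi (0 : ℝ), ((subWeight lam w t : ℝ) : ℂ) * heatKernelTa a ε t φ := rfl
  rw [hdef, norm_mul, norm_div, norm_one, Real.Gamma_one_half_eq, Complex.norm_real,
    Real.norm_of_nonneg (Real.sqrt_nonneg _), one_div]
  refine mul_le_mul_of_nonneg_left ?_ (by positivity)
  refine norm_integral_le_of_norm_le hg ?_
  refine (ae_restrict_iff' measurableSet_Ioi).2 (Filter.Eventually.of_forall fun t ht => ?_)
  have ht : 0 < t := ht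
  have hW : 0 ≤ subWeight lam w t := by unfold subWeight; positivity
  rw [norm_mul, Complex.norm_real, Real.norm_of_nonneg hW]
  exact (mul_le_mul_of_nonneg_left (hk t ht) hW).trans (hle t ht)

lemma rpow_four_pi_le {t : ℝ} (ht : 0 < t) :
    (4 * π * t) ^ (-(1 : ℝ) / 2) ≤ t ^ (-(1 : ℝ) / 2) :=
  Real.rpow_le_rpow_of_nonpos ht (by nlinarith [Real.pi_gt_three]) (by norm_num)

lemma rpow_half_sq {x : ℝ} (hx : 0 < x) : x ^ (-(1 : ℝ) / 2) * x ^ (-(1 : ℝ) / 2) = x⁻¹ := by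
  rw [← Real.rpow_add hx, ← Real.rpow_neg_one]; norm_num

lemma subWeight_le {lam w t : ℝ} (ht : 0 < t) :
    subWeight lam w t ≤ t⁻¹ * Real.exp (-lam * t) * Real.exp (-w ^ 2 / (4 * t)) := by
  rw [← rpow_half_sq ht]
  unfold subWeight
  have h := rpow_four_pi_le ht
  calc _ ≤ t ^ (-(1 : ℝ) / 2) * Real.exp (-lam * t) * t ^ (-(1 : ℝ) / 2) *
        Real.exp (-w ^ 2 / (4 * t)) := by gcongr
    _ = _ := by ring

/-- Singular part near the diagonal: dropping `e^{-λt}`, the subordination integral of the Gaussian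
is the kernel of `(-Δ)^{-1/2}` on the plane. -/
lemma main_part_le {lam w φ t : ℝ} (hlam : 0 < lam) (ht : 0 < t) :
    subWeight lam w t * ((4 * π * t) ^ (-(1 : ℝ) / 2) * Real.exp (-φ ^ 2 / (4 * t))) ≤
      (4 * π)⁻¹ * (t ^ (-(3 : ℝ) / 2) * Real.exp (-((w ^ 2 + φ ^ 2) / 4 / t))) := by
  have h1 : Real.exp (-((w ^ 2 + φ ^ 2) / 4 / t)) =
      Real.exp (-w ^ 2 / (4 * t)) * Real.exp (-φ ^ 2 / (4 * t)) := by
    rw [← Real.exp_add]; congr 1; field_simp; ring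
  have h2 := rpow_half_sq (by positivity : 0 < 4 * π * t)
  have h3 : t ^ (-(3 : ℝ) / 2) = t ^ (-(1 : ℝ) / 2) * t⁻¹ := by
    rw [← Real.rpow_neg_one, ← Real.rpow_add ht]; norm_num
  have h4 : Real.exp (-lam * t) ≤ 1 := Real.exp_le_one_iff.2 (by nlinarith)
  rw [h1, h3]
  unfold subWeight
  calc _ = (t ^ (-(1 : ℝ) / 2) * ((4 * π * t) ^ (-(1 : ℝ) / 2) * (4 * π * t) ^ (-(1 : ℝ) / 2)) *
        (Real.exp (-w ^ 2 / (4 * t)) * Real.exp (-φ ^ 2 / (4 * t)))) * Real.exp (-lam * t) := by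
        ring
    _ ≤ (t ^ (-(1 : ℝ) / 2) * ((4 * π * t) ^ (-(1 : ℝ) / 2) * (4 * π * t) ^ (-(1 : ℝ) / 2)) *
        (Real.exp (-w ^ 2 / (4 * t)) * Real.exp (-φ ^ 2 / (4 * t)))) * 1 :=
        mul_le_mul_of_nonneg_left h4 (by positivity)
    _ = _ := by rw [h2, mul_inv]; ring

/-- The bounded part of the heat kernel leaves `∫ t⁻¹ e^{-λt - w²/(4t)} dt`, which would be
logarithmic in `w`; spending a power `t^{δ/2}` costs `|w|^{-δ}`. -/
lemma error_part_le {lam w t δ : ℝ} (ht : 0 < t) (hδ : 0 < δ) (hw : 0 < |w|) :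
    subWeight lam w t ≤ ((δ / 2) ^ (δ / 2) * 4 ^ (δ / 2) * |w| ^ (-δ)) *
      (t ^ (δ / 2 - 1) * Real.exp (-(lam * t))) := by
  have h1 := exp_neg_le_rpow (x := w ^ 2 / (4 * t)) (p := δ / 2)
    (by rw [← sq_abs]; positivity) (by positivity)
  have h2 : (w ^ 2 / (4 * t)) ^ (-(δ / 2)) = 4 ^ (δ / 2) * t ^ (δ / 2) * |w| ^ (-δ) := by
    rw [← sq_abs, ← Real.rpow_natCast, Real.div_rpow (by positivity) (by positivity),
      ← Real.rpow_mul hw.le, Real.rpow_neg (by positivity : 0 ≤ 4 * t),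
      Real.mul_rpow (by norm_num) ht.le, div_inv_eq_mul]
    rw [show ((2 : ℕ) : ℝ) * -(δ / 2) = -δ by push_cast; ring]
    ring
  rw [h2, ← neg_div] at h1
  refine (subWeight_le ht).trans ?_
  calc _ ≤ t⁻¹ * Real.exp (-lam * t) *
        ((δ / 2) ^ (δ / 2) * (4 ^ (δ / 2) * t ^ (δ / 2) * |w| ^ (-δ))) := by gcongr
    _ = _ := by
      rw [Real.rpow_sub_one ht.ne', neg_mul]; ring

/-- Off-diagonal decay: by the arithmetic-geometric mean inequality half of `λt + w²/(4t)` is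
already at least `(√λ/2)|w|`. -/
lemma far_part_le {lam w t : ℝ} (hlam : 0 < lam) (ht : 0 < t) (hw : 1 ≤ |w|) :
    subWeight lam w t ≤ 8 * Real.exp (-(√lam / 2) * |w|) * Real.exp (-(lam / 2 * t)) := by
  have h0 : Real.exp (-(1 / (8 * t))) ≤ 8 * t := by
    have := Real.add_one_le_exp (1 / (8 * t))
    rw [Real.exp_neg]
    calc _ ≤ (1 / (8 * t))⁻¹ := inv_anti₀ (by positivity) (by linarith)
      _ = _ := by field_simp
  have h1 : -lam * t + -w ^ 2 / (4 * t) ≤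
      -(√lam / 2) * |w| + -(lam / 2 * t) + -(1 / (8 * t)) := by
    have hs : √lam * √lam = lam := Real.mul_self_sqrt hlam.le
    have hw2 : 1 ≤ w ^ 2 := by rw [← sq_abs]; nlinarith
    have h2 : √lam / 2 * |w| ≤ lam / 2 * t + w ^ 2 / (8 * t) := by
      have : lam / 2 * t + w ^ 2 / (8 * t) - √lam / 2 * |w| = (2 * √lam * t - |w|) ^ 2 / (8 * t) := by
        rw [← sq_abs w]; field_simp; ring_nf; rw [Real.sq_sqrt hlam.le]; ring
      have : 0 ≤ (2 * √lam * t - |w|) ^ 2 / (8 * t) := by positivity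
      linarith
    have h3 : 1 / (8 * t) ≤ w ^ 2 / (8 * t) := by gcongr
    have h4 : -w ^ 2 / (4 * t) = -(w ^ 2 / (8 * t)) - w ^ 2 / (8 * t) := by field_simp; ring
    rw [h4]; linarith
  refine (subWeight_le ht).trans ?_
  rw [mul_assoc, ← Real.exp_add]
  calc _ ≤ t⁻¹ * (Real.exp (-(√lam / 2) * |w| + -(lam / 2 * t)) * (8 * t)) := by
        refine mul_le_mul_of_nonneg_left ?_ (by positivity)
        refine (Real.exp_le_exp.2 h1).trans ?_
        rw [Real.exp_add]
        exact mul_le_mul_of_nonneg_left h0 (Real.exp_nonneg _)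
    _ = _ := by rw [Real.exp_add]; field_simp

/-! ### Estimates of `phiTwo` -/

lemma phiTwo_near {a ε lam δ C : ℝ} (hlam : 0 < lam) (hδ : 0 < δ) (hC : 0 < C)
    (hk : ∀ t φ : ℝ, 0 < t → |φ| ≤ π → ‖heatKernelTa a ε t φ‖ ≤
      (4 * π * t) ^ (-(1 : ℝ) / 2) * Real.exp (-φ ^ 2 / (4 * t)) + C) :
    ∃ C₁ > 0, ∀ w φ : ℝ, 0 < |w| → |φ| ≤ π → ‖phiTwo a ε lam w φ‖ ≤
      (1 / (2 * π)) * (√(w ^ 2 + φ ^ 2))⁻¹ + C₁ * |w| ^ (-δ) := by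
  have hJ : 0 < (1 / lam) ^ (δ / 2) * Real.Gamma (δ / 2) :=
    mul_pos (by positivity) (Real.Gamma_pos_of_pos (by positivity))
  refine ⟨(√π)⁻¹ * (C * ((δ / 2) ^ (δ / 2) * 4 ^ (δ / 2))) *
    ((1 / lam) ^ (δ / 2) * Real.Gamma (δ / 2)), by positivity, fun w φ hw hφ => ?_⟩
  have hr : 0 < w ^ 2 + φ ^ 2 := by
    have : 0 < w ^ 2 := by rw [← sq_abs]; positivity
    positivity
  obtain ⟨hi, hI⟩ := integral_subordination (b := (w ^ 2 + φ ^ 2) / 4) (by positivity)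
  have hi2 := integrableOn_gamma (p := δ / 2) (by positivity) hlam
  set K := C * ((δ / 2) ^ (δ / 2) * 4 ^ (δ / 2) * |w| ^ (-δ)) with hK
  have h := phiTwo_le (lam := lam) (w := w) (fun t ht => hk t φ ht hφ)
    ((hi.const_mul (4 * π)⁻¹).add (hi2.const_mul K)) (fun t ht => by
      have h1 := main_part_le (w := w) (φ := φ) hlam ht
      have h2 := mul_le_mul_of_nonneg_left (error_part_le (lam := lam) ht hδ hw) hC.le
      rw [mul_add]
      refine (add_le_add h1 ((mul_comm _ _).le.trans h2)).trans (le_of_eq ?_)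
      simp only [Pi.add_apply, hK]; ring)
  refine h.trans (le_of_eq ?_)
  simp only [Pi.add_apply]
  rw [integral_add (hi.const_mul _) (hi2.const_mul _), integral_const_mul, integral_const_mul, hI,
    Real.integral_rpow_mul_exp_neg_mul_Ioi (by positivity) hlam, Real.sqrt_div hr.le,
    show √(4 : ℝ) = 2 by rw [show (4 : ℝ) = 2 ^ 2 by norm_num]; simp, hK]
  have hsp : √π ≠ 0 := by positivity
  have hsr : √(w ^ 2 + φ ^ 2) ≠ 0 := by positivity
  rw [mul_add]
  congr 1
  · field_simp; ring
  · ring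

lemma phiTwo_far {a ε lam C : ℝ} (hlam : 0 < lam) (hC : 0 < C)
    (hk : ∀ t φ : ℝ, 0 < t → |φ| ≤ π → ‖heatKernelTa a ε t φ‖ ≤
      (4 * π * t) ^ (-(1 : ℝ) / 2) * Real.exp (-φ ^ 2 / (4 * t)) + C) :
    ∃ C₂, ∀ w φ : ℝ, 1 ≤ |w| → |φ| ≤ π → ‖phiTwo a ε lam w φ‖ ≤
      C₂ * Real.exp (-(√lam / 2) * |w|) := by
  have hi : IntegrableOn (fun t : ℝ => t ^ ((1 / 2 : ℝ) - 1) * Real.exp (-(lam / 2 * t)) +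
      C * (t ^ ((1 : ℝ) - 1) * Real.exp (-(lam / 2 * t)))) (Set.Ioi 0) :=
    (integrableOn_gamma (by norm_num) (by positivity)).add
      ((integrableOn_gamma one_pos (by positivity)).const_mul C)
  set J := ∫ t in Set.Ioi (0 : ℝ), (t ^ ((1 / 2 : ℝ) - 1) * Real.exp (-(lam / 2 * t)) +
      C * (t ^ ((1 : ℝ) - 1) * Real.exp (-(lam / 2 * t)))) with hJ
  refine ⟨(√π)⁻¹ * 8 * J, fun w φ hw hφ => ?_⟩
  have h := phiTwo_le (lam := lam) (w := w) (fun t ht => hk t φ ht hφ)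
    (hi.const_mul (8 * Real.exp (-(√lam / 2) * |w|))) (fun t ht => by
      have h1 := far_part_le hlam ht hw
      have h2 : (4 * π * t) ^ (-(1 : ℝ) / 2) * Real.exp (-φ ^ 2 / (4 * t)) ≤
          t ^ ((1 / 2 : ℝ) - 1) := by
        have h3 : Real.exp (-φ ^ 2 / (4 * t)) ≤ 1 :=
          Real.exp_le_one_iff.2 (div_nonpos_of_nonpos_of_nonneg (by nlinarith) (by positivity))
        rw [show (1 / 2 : ℝ) - 1 = -(1 : ℝ) / 2 by norm_num]
        have h4 := mul_le_mul (rpow_four_pi_le ht) h3 (Real.exp_nonneg _) (by positivity)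
        rwa [mul_one] at h4
      have h5 := mul_le_mul h1 (add_le_add_left h2 C) (by positivity) (by positivity)
      refine h5.trans (le_of_eq ?_)
      rw [sub_self, Real.rpow_zero]; ring)
  refine h.trans (le_of_eq ?_)
  rw [integral_const_mul, ← hJ]; ring

/-- Asymptotic estimates for the kernel `φ₂` of `(-∂_w² - T_a + λ)^{-1/2}`:
for `λ > 0`, `0 < a ≤ 1/2`, `ε > 0` and any given `δ₃ > 0`, there exist `C > 0`
and `δ₄ > 0` such that
(i) `|φ₂| ≤ (1/2π)((w-w')² + (θ-θ')²)^{-1/2} + C |w-w'|^{-δ₃}` when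
`0 < |w-w'| ≤ 1`, `|θ-θ'| ≤ π`; and
(ii) `|φ₂| ≤ C e^{-δ₄|w-w'|}` when `|w-w'| ≥ 1`, `|θ-θ'| ≤ π`. -/
theorem phiTwo_estimates (lam a ε δ₃ : ℝ) (hlam : 0 < lam) (ha0 : 0 < a)
    (ha1 : a ≤ 1 / 2) (hε : 0 < ε) (hδ₃ : 0 < δ₃) :
    ∃ C > 0, ∃ δ₄ > 0, ∀ w w' θ θ' : ℝ,
      (0 < |w - w'| → |w - w'| ≤ 1 → |θ - θ'| ≤ π →
        ‖phiTwo a ε lam (w - w') (θ - θ')‖ ≤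
          (1 / (2 * π)) * (Real.sqrt ((w - w') ^ 2 + (θ - θ') ^ 2))⁻¹ +
            C * |w - w'| ^ (-δ₃)) ∧
      (1 ≤ |w - w'| → |θ - θ'| ≤ π →
        ‖phiTwo a ε lam (w - w') (θ - θ')‖ ≤ C * Real.exp (-δ₄ * |w - w'|)) := by
  obtain ⟨C, hC, hk⟩ := heatKernelTa_le ha0 ha1 hε
  obtain ⟨C₁, hC₁, h1⟩ := phiTwo_near hlam hδ₃ hC hk
  obtain ⟨C₂, h2⟩ := phiTwo_far hlam hC hk
  refine ⟨max C₁ C₂, lt_max_of_lt_left hC₁, √lam / 2, by positivity, fun w w' θ θ' =>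
    ⟨fun hw _ hθ => (h1 _ _ hw hθ).trans ?_, fun hw hθ => (h2 _ _ hw hθ).trans ?_⟩⟩
  · gcongr
    exact le_max_left _ _
  · gcongr
    exact le_max_right _ _
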